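/- Let (X,d) be a compact metric space and f : X → X a continuous map such that (X,f) has the approximate product property. Then the set of ergodic f-invariant Borel probability measures on X is dense in the set of all f-invariant Borel probability measures on X, equipped with the weak-* topology. -/

import Mathlib

open MeasureTheory Filter Set

section Defs

variable {X : Type*} [MetricSpace X]

/-- `segStart m t k` is the time `s_k` at which the `k`-th orbit segment starts
(indexing from `k = 0`): `s_0 = 0`, `s_{k+1} = s_k + m_k + t_k - 1`. -/
def segStart (m t : ℕ → ℕ) (k : ℕ) : ℕ :=
  ∑ i ∈ Finset.range k, (m i + t i - 1)

/-- `(δ, ε)`-tracing of the sequence of orbit segments `(C k, m k)` with gaps `t k`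
by the point `z`. -/
def Traced (f : X → X) (C : ℕ → X) (m t : ℕ → ℕ) (δ ε : ℝ) (z : X) : Prop :=
  ∀ k : ℕ,
    (((Finset.range (m k)).filter
      (fun j => ε < dist (f^[segStart m t k + j] z) (f^[j] (C k)))).card : ℝ)
      ≤ δ * (m k)

/-- The approximate product property. -/
def ApproxProduct (f : X → X) : Prop :=
  ∀ δ₁ δ₂ ε : ℝ, 0 < δ₁ → 0 < δ₂ → 0 < ε →
    ∃ M : ℕ, ∀ n : ℕ, M < n → ∀ C : ℕ → X,
      ∃ t : ℕ → ℕ, (∀ k, 0 < t k) ∧ (∀ k, (t k : ℝ) ≤ 1 + δ₁ * n) ∧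
        ∃ z : X, Traced f C (fun _ => n) t δ₂ ε z

/-- The strict approximate product property. -/
def StrictApproxProduct (f : X → X) : Prop :=
  ∀ δ ε : ℝ, 0 < δ → 0 < ε →
    ∃ M : ℕ, ∀ n : ℕ, M < n → ∀ C : ℕ → X,
      ∃ t : ℕ → ℕ, (∀ k, 0 < t k) ∧ (∀ k, (t k : ℝ) ≤ 1 + δ * n) ∧
        ∃ z : X, Traced f C (fun _ => n) t 0 ε z

/-- Maximal cardinality of an `(n, ε)`-separated subset of `K`. -/
noncomputable def sepNum (f : X → X) (K : Set X) (n : ℕ) (ε : ℝ) : ℕ :=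
  sSup {c : ℕ | ∃ S : Finset X, ↑S ⊆ K ∧ S.card = c ∧
    ∀ y ∈ S, ∀ y' ∈ S, y ≠ y' → ∃ j < n, ε < dist (f^[j] y) (f^[j] y')}

/-- Entropy of `f` on `K` at scale `ε`:
`h(K, f, ε) = limsup_n (1/n) log s(K, n, ε)`. -/
noncomputable def entScale (f : X → X) (K : Set X) (ε : ℝ) : EReal :=
  limsup (fun n : ℕ => ((Real.log (sepNum f K n ε) / n : ℝ) : EReal)) atTop

/-- Bowen's topological entropy `h(f) = lim_{ε → 0} h(X, f, ε)`
(the limit is a supremum by monotonicity in `ε`). -/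
noncomputable def topEnt (f : X → X) : EReal :=
  ⨆ (ε : ℝ) (_ : (0:ℝ) < ε), entScale f Set.univ ε

/-- Unique ergodicity: there is exactly one `f`-invariant Borel probability measure. -/
def UniquelyErgodic [MeasurableSpace X] (f : X → X) : Prop :=
  ∃! μ : Measure X, IsProbabilityMeasure μ ∧ Measure.map f μ = μ

/-- Minimality: every orbit is dense. -/
def MinimalSystem (f : X → X) : Prop :=
  ∀ x : X, Dense (Set.range fun n => f^[n] x)

/-!
Let `μ` be invariant and let `g : X → E` be continuous with `∫ g ∂μ = 0`. By the strong law of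
large numbers there are points `x₀, …, x_{L-1}` whose Birkhoff sums of length `n` add up to `o(nL)`.
Repeat this list periodically and trace it: outside a small proportion of times, the orbit of the
tracing point `z` is a concatenation of copies of the list, so *every* long enough window of the
orbit of `z` has Birkhoff average at most `ε`. The points all of whose windows of one fixed length
have this property form a nonempty closed forward invariant set. It carries an ergodic measure `ν`,
and integrating the Birkhoff average gives `‖∫ g ∂ν‖ ≤ ε`. A finite family of test functions is
treated at once by taking `g` vector valued.
-/

open scoped Topology BoundedContinuousFunction

/-! ### Birkhoff sums -/

section BirkhoffSum

variable {α E : Type*} [NormedAddCommGroup E] {f : α → α} {g : α → E}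

theorem norm_birkhoffSum_le {D : ℝ} (hg : ∀ x, ‖g x‖ ≤ D) (n : ℕ) (x : α) :
    ‖birkhoffSum f g n x‖ ≤ n * D := by
  simpa [birkhoffSum] using norm_sum_le_of_le (Finset.range n) fun k _ ↦ hg (f^[k] x)

theorem continuous_birkhoffSum [TopologicalSpace α] (hf : Continuous f) (hg : Continuous g)
    (n : ℕ) : Continuous (birkhoffSum f g n) :=
  continuous_finsetSum _ fun k _ ↦ hg.comp (hf.iterate k)

variable [MeasurableSpace α] {μ : Measure α} [NormedSpace ℝ E]

theorem integral_birkhoffSum (hf : MeasurePreserving f μ μ) (hg : Integrable g μ) (n : ℕ) :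
    ∫ x, birkhoffSum f g n x ∂μ = (n : ℝ) • ∫ x, g x ∂μ := by
  have integral_comp_iterate (k : ℕ) : ∫ x, g (f^[k] x) ∂μ = ∫ x, g x ∂μ := by
    have hk := hf.iterate k
    rw [← integral_map hk.aemeasurable (hk.map_eq.symm ▸ hg.1), hk.map_eq]
  have integrable_comp_iterate (k : ℕ) : Integrable (fun x ↦ g (f^[k] x)) μ :=
    (hf.iterate k).integrable_comp_of_integrable hg
  simp only [birkhoffSum]
  rw [integral_finsetSum _ fun k _ ↦ integrable_comp_iterate k]
  simp [integral_comp_iterate, Nat.cast_smul_eq_nsmul]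

theorem norm_integral_le_of_ae_norm_birkhoffSum_le [IsProbabilityMeasure μ]
    (hf : MeasurePreserving f μ μ) (hg : Integrable g μ) {N : ℕ} (hN : 0 < N) {ε : ℝ}
    (h : ∀ᵐ x ∂μ, ‖birkhoffSum f g N x‖ ≤ ε * N) : ‖∫ x, g x ∂μ‖ ≤ ε := by
  have hN' : (0 : ℝ) < N := Nat.cast_pos.2 hN
  have hsum : ‖∫ x, birkhoffSum f g N x ∂μ‖ ≤ ε * N := by
    simpa using norm_integral_le_of_norm_le_const h
  rw [integral_birkhoffSum hf hg, norm_smul, Real.norm_of_nonneg hN'.le, mul_comm] at hsum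
  exact le_of_mul_le_mul_right hsum hN'

end BirkhoffSum

/-! ### Invariant and ergodic measures -/

section ErgodicMeasures

variable {Y : Type*} [MeasurableSpace Y]

/-- The uniform distribution on the orbit segment `x, f x, …, f^[n] x`, whose limits as `n → ∞` are
invariant. The segment has `n + 1` points so that this is a probability measure for every `n`. -/
noncomputable def empiricalMeasure (f : Y → Y) (x : Y) (n : ℕ) : ProbabilityMeasure Y :=
  ⟨((PMF.uniformOfFintype (Fin (n + 1))).map fun i : Fin (n + 1) ↦ f^[i] x).toMeasure,
    inferInstance⟩

theorem integral_empiricalMeasure {E : Type*} [NormedAddCommGroup E] [NormedSpace ℝ E]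
    [CompleteSpace E] (f : Y → Y) (x : Y) (n : ℕ) {g : Y → E} (hg : StronglyMeasurable g) :
    ∫ y, g y ∂(empiricalMeasure f x n : Measure Y) = birkhoffAverage ℝ f g (n + 1) x := by
  have hmeas : Measurable fun i : Fin (n + 1) ↦ f^[i] x := measurable_of_finite _
  rw [empiricalMeasure, ProbabilityMeasure.coe_mk, ← PMF.toMeasure_map (hf := hmeas),
    integral_map hmeas.aemeasurable hg.aestronglyMeasurable, PMF.integral_eq_sum]
  simp [birkhoffAverage, birkhoffSum, Finset.sum_range, Finset.smul_sum, ENNReal.toReal_add]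

variable [TopologicalSpace Y]

/-- A probability measure as a point of the locally convex space of functionals on the bounded
continuous functions, where the Krein–Milman theorem is available. -/
noncomputable def testIntegrals (ν : ProbabilityMeasure Y) (φ : Y →ᵇ ℝ) : ℝ :=
  ∫ y, φ y ∂(ν : Measure Y)

theorem continuous_testIntegrals [OpensMeasurableSpace Y] :
    Continuous (testIntegrals : ProbabilityMeasure Y → (Y →ᵇ ℝ) → ℝ) :=
  continuous_pi ProbabilityMeasure.continuous_integral_boundedContinuousFunction

theorem mem_closure_of_forall_finset_exists_dist_testIntegrals_le [OpensMeasurableSpace Y]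
    {S : Set (ProbabilityMeasure Y)} {μ : ProbabilityMeasure Y}
    (h : ∀ (F : Finset (Y →ᵇ ℝ)) (ε : ℝ), 0 < ε → ∃ ν ∈ S, ∀ φ ∈ F,
      dist (testIntegrals ν φ) (testIntegrals μ φ) ≤ ε) :
    μ ∈ closure S := by
  classical
  choose ν hνS hν using fun p : Finset (Y →ᵇ ℝ) × ℕ ↦
    h p.1 (1 / ((p.2 : ℝ) + 1)) Nat.one_div_pos_of_nat
  refine mem_closure_of_tendsto (f := ν) (b := atTop) ?_ (Eventually.of_forall hνS)
  refine ProbabilityMeasure.tendsto_iff_forall_integral_tendsto.2 fun φ ↦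
    tendsto_iff_dist_tendsto_zero.2 ?_
  have herror : Tendsto (fun p : Finset (Y →ᵇ ℝ) × ℕ ↦ 1 / ((p.2 : ℝ) + 1)) atTop (𝓝 0) := by
    rw [← prod_atTop_atTop_eq]
    exact tendsto_one_div_add_atTop_nhds_zero_nat.comp tendsto_snd
  refine squeeze_zero' (Eventually.of_forall fun _ ↦ dist_nonneg) ?_ herror
  filter_upwards [eventually_ge_atTop (({φ}, 0) : Finset (Y →ᵇ ℝ) × ℕ)] with p hp
  exact hν p φ (hp.1 (Finset.mem_singleton_self φ))

variable [BorelSpace Y] {f : Y → Y}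

theorem measurePreserving_iff_map_eq (hf : Continuous f) (ν : ProbabilityMeasure Y) :
    MeasurePreserving f (ν : Measure Y) ν ↔ ν.map hf.aemeasurable = ν :=
  ⟨fun h ↦ Subtype.ext h.map_eq, fun h ↦ ⟨hf.measurable, congrArg Subtype.val h⟩⟩

variable [HasOuterApproxClosed Y]

theorem testIntegrals_injective :
    Function.Injective (testIntegrals : ProbabilityMeasure Y → (Y →ᵇ ℝ) → ℝ) := fun μ ν h ↦
  Subtype.ext (ext_of_forall_integral_eq_of_IsFiniteMeasure (μ := (μ : Measure Y))
    (ν := (ν : Measure Y)) (congrFun h))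

theorem isClosed_setOf_measurePreserving (hf : Continuous f) :
    IsClosed {ν : ProbabilityMeasure Y | MeasurePreserving f (ν : Measure Y) ν} := by
  simp only [measurePreserving_iff_map_eq hf]
  exact isClosed_eq (ProbabilityMeasure.continuous_map hf) continuous_id

theorem ergodic_of_testIntegrals_mem_extremePoints {ν : ProbabilityMeasure Y}
    (h : testIntegrals ν ∈ extremePoints ℝ
      (testIntegrals '' {ν : ProbabilityMeasure Y | MeasurePreserving f (ν : Measure Y) ν})) :
    Ergodic f (ν : Measure Y) := by
  have hν : MeasurePreserving f (ν : Measure Y) ν :=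
    (testIntegrals_injective.mem_set_image).1 h.1
  refine Ergodic.of_mem_extremePoints
    (mem_extremePoints_iff_left.2 ⟨⟨hν, inferInstance⟩, ?_⟩)
  rintro ν₁ ⟨hν₁, hprob₁⟩ ν₂ ⟨hν₂, hprob₂⟩ ⟨a, b, ha, hb, hab, hcomb⟩
  have ha' : a ≠ ⊤ := ne_top_of_le_ne_top ENNReal.one_ne_top (hab ▸ le_self_add)
  have hb' : b ≠ ⊤ := ne_top_of_le_ne_top ENNReal.one_ne_top (hab ▸ le_add_self)
  have hsegment : testIntegrals ν ∈
      openSegment ℝ (testIntegrals ⟨ν₁, hprob₁⟩) (testIntegrals ⟨ν₂, hprob₂⟩) := by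
    refine ⟨a.toReal, b.toReal, ENNReal.toReal_pos ha.ne' ha', ENNReal.toReal_pos hb.ne' hb',
      by rw [← ENNReal.toReal_add ha' hb', hab, ENNReal.toReal_one], funext fun φ ↦ ?_⟩
    simp only [testIntegrals, ← hcomb, Pi.add_apply, Pi.smul_apply, ProbabilityMeasure.coe_mk]
    rw [integral_add_measure ((φ.integrable ν₁).smul_measure ha')
      ((φ.integrable ν₂).smul_measure hb'), integral_smul_measure, integral_smul_measure]
  exact congrArg Subtype.val
    (testIntegrals_injective (h.2 ⟨_, hν₁, rfl⟩ ⟨_, hν₂, rfl⟩ hsegment))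

/-- The Krylov–Bogolyubov theorem. -/
theorem exists_measurePreserving [T2Space Y] [CompactSpace Y] [Nonempty Y] (hf : Continuous f) :
    ∃ ν : ProbabilityMeasure Y, MeasurePreserving f (ν : Measure Y) ν := by
  obtain ⟨x⟩ := ‹Nonempty Y›
  obtain ⟨ν, -, hν : Tendsto (empiricalMeasure f x) (hyperfilter ℕ : Filter ℕ) (𝓝 ν)⟩ :=
    isCompact_univ.ultrafilter_le_nhds ((hyperfilter ℕ).map (empiricalMeasure f x)) (by simp)
  refine ⟨ν, (measurePreserving_iff_map_eq hf ν).2 (tendsto_nhds_unique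
    (ProbabilityMeasure.tendsto_map_of_tendsto_of_continuous _ _ hν hf) ?_)⟩
  refine ProbabilityMeasure.tendsto_iff_forall_integral_tendsto.2 fun φ ↦ ?_
  have hdiff : Tendsto (fun n ↦ birkhoffAverage ℝ f φ (n + 1) (f x) -
      birkhoffAverage ℝ f φ (n + 1) x) (hyperfilter ℕ : Filter ℕ) (𝓝 0) :=
    ((tendsto_birkhoffAverage_apply_sub_birkhoffAverage' ℝ φ.isBounded_range f x).comp
      (tendsto_add_atTop_nat 1)).mono_left Nat.hyperfilter_le_atTop
  have hlim := hdiff.add (ProbabilityMeasure.tendsto_iff_forall_integral_tendsto.1 hν φ)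
  rw [zero_add] at hlim
  refine hlim.congr fun n ↦ ?_
  have hφ : StronglyMeasurable φ := φ.continuous.stronglyMeasurable
  have hφf : StronglyMeasurable fun y ↦ φ (f y) := hφ.comp_measurable hf.measurable
  rw [ProbabilityMeasure.toMeasure_map, integral_map hf.aemeasurable hφ.aestronglyMeasurable,
    integral_empiricalMeasure f x n hφ, integral_empiricalMeasure f x n hφf]
  simp [birkhoffAverage, birkhoffSum, ← Function.iterate_succ_apply, Function.iterate_succ_apply']

theorem exists_ergodic [T2Space Y] [CompactSpace Y] [Nonempty Y] (hf : Continuous f) :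
    ∃ ν : ProbabilityMeasure Y, Ergodic f (ν : Measure Y) := by
  obtain ⟨_, hextreme⟩ :=
    ((isClosed_setOf_measurePreserving hf).isCompact.image
      continuous_testIntegrals).extremePoints_nonempty
      (Set.Nonempty.image _ (exists_measurePreserving hf))
  obtain ⟨ν, -, rfl⟩ := hextreme.1
  exact ⟨ν, ergodic_of_testIntegrals_mem_extremePoints hextreme⟩

end ErgodicMeasures

theorem exists_ergodic_ae_mem {Y : Type*} [TopologicalSpace Y] [CompactSpace Y]
    [TopologicalSpace.MetrizableSpace Y] [MeasurableSpace Y] [BorelSpace Y] {f : Y → Y}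
    (hf : Continuous f) {K : Set Y} (hK : IsClosed K) (hne : K.Nonempty) (hmaps : MapsTo f K K) :
    ∃ ν : ProbabilityMeasure Y, Ergodic f (ν : Measure Y) ∧ ∀ᵐ x ∂(ν : Measure Y), x ∈ K := by
  have : CompactSpace K := isCompact_iff_compactSpace.1 hK.isCompact
  have : Nonempty K := hne.to_subtype
  obtain ⟨ν, hν⟩ := exists_ergodic (hf.restrict hmaps)
  have hval : MeasurePreserving (Subtype.val : K → Y) ν ((ν : Measure K).map Subtype.val) :=
    measurable_subtype_coe.measurePreserving _
  refine ⟨ν.map measurable_subtype_coe.aemeasurable,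
    hval.ergodic_of_ergodic_semiconj hν hf.measurable fun _ ↦ rfl, ?_⟩
  exact (ae_map_iff measurable_subtype_coe.aemeasurable hK.measurableSet).2
    (Eventually.of_forall Subtype.property)

/-! ### Sampling from a probability measure -/

section Sampling

variable {Ω E : Type*} [MeasurableSpace Ω] [NormedAddCommGroup E] [NormedSpace ℝ E]
  [CompleteSpace E]

theorem exists_seq_tendsto_average_integral (μ : Measure Ω) [IsProbabilityMeasure μ] {g : Ω → E}
    (hmeas : StronglyMeasurable g) (hint : Integrable g μ) :
    ∃ x : ℕ → Ω, Tendsto (fun n : ℕ ↦ (n : ℝ)⁻¹ • ∑ i ∈ Finset.range n, g (x i)) atTop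
      (𝓝 (∫ ω, g ω ∂μ)) := by
  borelize E
  let P : Measure (ℕ → Ω) := Measure.infinitePi fun _ ↦ μ
  have heval (i : ℕ) : MeasurePreserving (fun ω : ℕ → Ω ↦ ω i) P μ :=
    measurePreserving_eval_infinitePi (fun _ ↦ μ) i
  have hindep : Pairwise (Function.onFun (ProbabilityTheory.IndepFun · · P)
      fun (i : ℕ) (ω : ℕ → Ω) ↦ g (ω i)) := fun _ _ hij ↦
    (ProbabilityTheory.iIndepFun_infinitePi (P := fun _ : ℕ ↦ μ) (X := fun _ ↦ g)
      fun _ ↦ hmeas.measurable).indepFun hij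
  have hident (i : ℕ) :
      ProbabilityTheory.IdentDistrib (fun ω : ℕ → Ω ↦ g (ω i)) (fun ω ↦ g (ω 0)) P P :=
    ProbabilityTheory.IdentDistrib.comp
      ⟨(heval i).aemeasurable, (heval 0).aemeasurable, by rw [(heval i).map_eq, (heval 0).map_eq]⟩
      hmeas.measurable
  have hexpectation : ∫ ω, g (ω 0) ∂P = ∫ ω, g ω ∂μ := by
    rw [← (heval 0).map_eq, integral_map (heval 0).aemeasurable hmeas.aestronglyMeasurable]
  rw [← hexpectation]
  exact (ProbabilityTheory.strong_law_ae _ ((heval 0).integrable_comp_of_integrable hint)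
    hindep hident).exists

theorem exists_norm_sum_le_of_integral_eq_zero {μ : Measure Ω} [IsProbabilityMeasure μ]
    {g : Ω → E} (hmeas : StronglyMeasurable g) (hint : Integrable g μ) (hzero : ∫ ω, g ω ∂μ = 0)
    {ε : ℝ} (hε : 0 < ε) :
    ∃ L : ℕ, 0 < L ∧ ∃ x : ℕ → Ω, ‖∑ i ∈ Finset.range L, g (x i)‖ ≤ ε * L := by
  obtain ⟨x, hx⟩ := exists_seq_tendsto_average_integral μ hmeas hint
  rw [hzero] at hx
  obtain ⟨L, hnear, hL⟩ :=
    ((Metric.tendsto_nhds.1 hx ε hε).and (eventually_gt_atTop 0)).exists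
  have hL' : (0 : ℝ) < L := Nat.cast_pos.2 hL
  rw [dist_zero_right, norm_smul, norm_inv, Real.norm_natCast, inv_mul_lt_iff₀ hL', mul_comm]
    at hnear
  exact ⟨L, hL, x, hnear.le⟩

end Sampling

/-! ### Concatenation of blocks -/

section Blocks

/-- The times `τ 0 = 0 < τ 1 < τ 2 < …` cut `ℕ` into blocks `[τ q, τ (q + 1))` of length at most
`W`, over which Birkhoff sums are estimated block by block. -/
structure IsBlockPartition (τ : ℕ → ℕ) (W : ℕ) : Prop where
  zero : τ 0 = 0
  strictMono : StrictMono τ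
  succ_le : ∀ q, τ (q + 1) ≤ τ q + W

namespace IsBlockPartition

variable {τ : ℕ → ℕ} {W : ℕ}

theorem apply_add_le (hτ : IsBlockPartition τ W) (q k : ℕ) : τ (q + k) ≤ τ q + W * k := by
  induction k with
  | zero => simp
  | succ k ih =>
    have := hτ.succ_le (q + k)
    rw [← add_assoc, mul_add]
    omega

theorem comp_mul_right (hτ : IsBlockPartition τ W) {L : ℕ} (hL : 0 < L) :
    IsBlockPartition (fun q ↦ τ (q * L)) (W * L) where
  zero := by simp [hτ.zero]
  strictMono := hτ.strictMono.comp (strictMono_mul_right_of_pos hL)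
  succ_le q := by simpa only [add_one_mul] using hτ.apply_add_le (q * L) L

theorem exists_mem_Ico (hτ : IsBlockPartition τ W) (a : ℕ) : ∃ q, a ∈ Ico (τ q) (τ (q + 1)) := by
  obtain ⟨q, hq, hq'⟩ := hτ.strictMono.exists_between_of_tendsto_atTop
    hτ.strictMono.tendsto_atTop (x := a + 1) (by simp [hτ.zero])
  exact ⟨q, Nat.lt_succ_iff.1 hq, hq'⟩

/-- Only the two blocks containing `a` and `b` are not covered by the block estimate. -/
theorem dist_le {M : Type*} [PseudoMetricSpace M] (hτ : IsBlockPartition τ W) {G : ℕ → M}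
    {c D : ℝ} (hblock : ∀ q, dist (G (τ q)) (G (τ (q + 1))) ≤ c * (τ (q + 1) - τ q))
    (hstep : ∀ i, dist (G i) (G (i + 1)) ≤ D) {a b : ℕ} (hab : a ≤ b) :
    dist (G a) (G b) ≤ c * (b - a) + (2 * D + c) * W := by
  have hD : 0 ≤ D := dist_nonneg.trans (hstep 0)
  have hc : 0 ≤ c := nonneg_of_mul_nonneg_left (dist_nonneg.trans (hblock 0))
    (sub_pos.2 (Nat.cast_lt.2 (hτ.strictMono zero_lt_one)))
  have hsteps (i j : ℕ) (hij : i ≤ j) (hjW : j ≤ i + W) : dist (G i) (G j) ≤ D * W := by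
    calc dist (G i) (G j) ≤ ∑ _k ∈ Finset.Ico i j, D :=
          dist_le_Ico_sum_of_dist_le hij fun _ _ ↦ hstep _
      _ = D * (j - i : ℕ) := by simp [mul_comm]
      _ ≤ D * W := by gcongr; omega
  obtain ⟨p, hpa, hap⟩ := hτ.exists_mem_Ico a
  obtain ⟨q, hqb, hbq⟩ := hτ.exists_mem_Ico b
  have hpq : p ≤ q := Nat.lt_succ_iff.1 (hτ.strictMono.lt_iff_lt.1 (show τ p < τ (q + 1) by omega))
  have hblocks : dist (G (τ p)) (G (τ q)) ≤ c * (τ q - τ p) := by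
    calc dist (G (τ p)) (G (τ q)) ≤ ∑ k ∈ Finset.Ico p q, c * ((τ (k + 1) : ℝ) - τ k) :=
          dist_le_Ico_sum_of_dist_le (f := G ∘ τ) hpq fun _ _ ↦ hblock _
      _ = c * (τ q - τ p) := by
          rw [← Finset.mul_sum, Finset.sum_Ico_sub (fun k ↦ (τ k : ℝ)) hpq]
  have hpW := hτ.succ_le p
  have hqW := hτ.succ_le q
  have hlength : (τ q : ℝ) - τ p ≤ b - a + W := by
    have : (τ q : ℝ) + a ≤ b + W + τ p := by norm_cast; omega
    linarith
  calc dist (G a) (G b)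
      ≤ dist (G (τ p)) (G a) + dist (G (τ p)) (G (τ q)) + dist (G (τ q)) (G b) := by
        rw [dist_comm (G (τ p)) (G a)]
        exact dist_triangle4 _ _ _ _
    _ ≤ D * W + c * (b - a + W) + D * W := by
        gcongr
        · exact hsteps _ _ hpa (by omega)
        · exact hblocks.trans (by gcongr)
        · exact hsteps _ _ hqb (by omega)
    _ = c * (b - a) + (2 * D + c) * W := by ring

theorem exists_forall_norm_birkhoffSum_iterate_le {α E : Type*} [NormedAddCommGroup E]
    (hτ : IsBlockPartition τ W) {f : α → α} {g : α → E} {z : α} {D c ε : ℝ}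
    (hg : ∀ x, ‖g x‖ ≤ D) (hcε : c < ε)
    (hblock : ∀ q, dist (birkhoffSum f g (τ q) z) (birkhoffSum f g (τ (q + 1)) z) ≤
      c * (τ (q + 1) - τ q)) :
    ∃ N, 0 < N ∧ ∀ a, ‖birkhoffSum f g N (f^[a] z)‖ ≤ ε * N := by
  obtain ⟨N, hN⟩ := exists_nat_ge ((2 * D + c) * W / (ε - c))
  rw [div_le_iff₀ (sub_pos.2 hcε)] at hN
  refine ⟨N + 1, N.succ_pos, fun a ↦ ?_⟩
  have hwindow := hτ.dist_le (G := (birkhoffSum f g · z)) hblock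
    (fun i ↦ by simpa [birkhoffSum_succ] using hg _) (Nat.le_add_right a (N + 1))
  rw [birkhoffSum_add, dist_self_add_right] at hwindow
  push_cast at hwindow ⊢
  linarith

end IsBlockPartition

variable {E : Type*} [NormedAddCommGroup E]

theorem norm_sum_sub_sum_le_of_forall_not {ι : Type*} (s : Finset ι) (p : ι → Prop)
    [DecidablePred p] {u v : ι → E} {ε D : ℝ} (hε : 0 ≤ ε) (hD : ∀ i ∈ s, ‖u i - v i‖ ≤ D)
    (hnear : ∀ i ∈ s, ¬ p i → ‖u i - v i‖ ≤ ε) :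
    ‖∑ i ∈ s, u i - ∑ i ∈ s, v i‖ ≤ ε * s.card + D * (s.filter p).card := by
  have hterm : ∀ i ∈ s, ‖u i - v i‖ ≤ ε + if p i then D else 0 := by
    intro i hi
    split_ifs with hpi
    · exact (hD i hi).trans (le_add_of_nonneg_left hε)
    · simpa using hnear i hi hpi
  calc ‖∑ i ∈ s, u i - ∑ i ∈ s, v i‖ = ‖∑ i ∈ s, (u i - v i)‖ := by rw [Finset.sum_sub_distrib]
    _ ≤ ∑ i ∈ s, (ε + if p i then D else 0) := norm_sum_le_of_le s hterm
    _ = ε * s.card + D * (s.filter p).card := by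
      rw [Finset.sum_add_distrib, ← Finset.sum_filter]
      simp [mul_comm]

theorem norm_sub_le_of_forall_norm_sub_sub_mod_le {A B : ℕ → E} {L : ℕ} {c : ℝ}
    (h : ∀ k, ‖A (k + 1) - A k - B (k % L)‖ ≤ c) (q : ℕ) :
    ‖A ((q + 1) * L) - A (q * L)‖ ≤ L * c + ‖∑ i ∈ Finset.range L, B i‖ := by
  have htelescope : A ((q + 1) * L) - A (q * L) =
      ∑ i ∈ Finset.range L, (A (q * L + i + 1) - A (q * L + i) - B i) +
        ∑ i ∈ Finset.range L, B i := by
    rw [Finset.sum_sub_distrib, sub_add_cancel, add_one_mul]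
    exact (Finset.sum_range_sub (fun i ↦ A (q * L + i)) L).symm
  rw [htelescope]
  refine (norm_add_le _ _).trans (add_le_add_left ?_ _)
  have hterm : ∀ i ∈ Finset.range L, ‖A (q * L + i + 1) - A (q * L + i) - B i‖ ≤ c := by
    intro i hi
    simpa [Nat.mod_eq_of_lt (Finset.mem_range.1 hi)] using h (q * L + i)
  simpa using norm_sum_le_of_le _ hterm

end Blocks

/-! ### Tracing orbits -/

section Tracing

theorem segStart_succ (m : ℕ → ℕ) {t : ℕ → ℕ} {k : ℕ} (ht : 0 < t k) :
    segStart m t (k + 1) = segStart m t k + (m k + (t k - 1)) := by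
  rw [segStart, Finset.sum_range_succ, ← segStart, Nat.add_sub_assoc ht]

theorem isBlockPartition_segStart {m t : ℕ → ℕ} {W : ℕ} (hm : ∀ k, 0 < m k) (ht : ∀ k, 0 < t k)
    (hW : ∀ k, m k + (t k - 1) ≤ W) : IsBlockPartition (segStart m t) W where
  zero := by simp [segStart]
  strictMono := strictMono_nat_of_lt_succ fun k ↦ by
    have := hm k
    rw [segStart_succ m (ht k)]
    omega
  succ_le k := by
    have := hW k
    rw [segStart_succ m (ht k)]
    omega

theorem segStart_add_mul_le {n : ℕ} {t : ℕ → ℕ} (ht : ∀ k, 0 < t k) (k i : ℕ) :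
    segStart (fun _ ↦ n) t k + n * i ≤ segStart (fun _ ↦ n) t (k + i) := by
  induction i with
  | zero => simp
  | succ i ih =>
    rw [← add_assoc, segStart_succ _ (ht _), mul_add]
    omega

variable {E : Type*} [NormedAddCommGroup E] {f : X → X}

theorem Traced.norm_birkhoffSum_sub_le {C : ℕ → X} {m t : ℕ → ℕ} {δ₁ δ₂ η : ℝ} {z : X}
    (hz : Traced f C m t δ₂ η z) {g : X → E} {ε D : ℝ} (hε : 0 ≤ ε) (hD : ∀ x, ‖g x‖ ≤ D)
    (hη : ∀ x y, dist x y ≤ η → ‖g x - g y‖ ≤ ε) {k : ℕ} (ht : 0 < t k)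
    (htδ : t k ≤ 1 + δ₁ * m k) :
    ‖birkhoffSum f g (segStart m t (k + 1)) z - birkhoffSum f g (segStart m t k) z -
      birkhoffSum f g (m k) (C k)‖ ≤ (ε + (δ₁ + 2 * δ₂) * D) * m k := by
  have hD0 : 0 ≤ D := (norm_nonneg _).trans (hD z)
  set w := f^[segStart m t k] z
  have hiterate (j : ℕ) : f^[segStart m t k + j] z = f^[j] w := by
    rw [add_comm, Function.iterate_add_apply]
  have hbad := hz k
  simp only [hiterate] at hbad
  have hsegment : ‖birkhoffSum f g (m k) w - birkhoffSum f g (m k) (C k)‖ ≤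
      ε * m k + 2 * D * (δ₂ * m k) := by
    refine (norm_sum_sub_sum_le_of_forall_not _ (fun j ↦ η < dist (f^[j] w) (f^[j] (C k))) hε
      (D := 2 * D) (fun j _ ↦ ?_) fun j _ hj ↦ hη _ _ (not_lt.1 hj)).trans ?_
    · linarith [norm_sub_le_of_le (hD (f^[j] w)) (hD (f^[j] (C k)))]
    · rw [Finset.card_range]
      gcongr
  have hgap : ‖birkhoffSum f g (t k - 1) (f^[m k] w)‖ ≤ δ₁ * m k * D := by
    refine (norm_birkhoffSum_le hD _ _).trans (mul_le_mul_of_nonneg_right ?_ hD0)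
    rw [Nat.cast_pred ht]
    linarith
  calc _ = ‖birkhoffSum f g (m k) w - birkhoffSum f g (m k) (C k) +
          birkhoffSum f g (t k - 1) (f^[m k] w)‖ := by
        rw [segStart_succ m ht, birkhoffSum_add, birkhoffSum_add, add_sub_cancel_left,
          add_sub_right_comm]
    _ ≤ (ε * m k + 2 * D * (δ₂ * m k)) + δ₁ * m k * D := norm_add_le_of_le hsegment hgap
    _ = _ := by ring

end Tracing

namespace ApproxProduct

variable {E : Type*} [CompactSpace X] [NormedAddCommGroup E] {f : X → X}

theorem exists_norm_birkhoffSum_segStart_sub_le (happ : ApproxProduct f) (g : C(X, E))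
    {ε : ℝ} (hε : 0 < ε) :
    ∃ n, 0 < n ∧ ∀ C : ℕ → X, ∃ (t : ℕ → ℕ) (z : X), (∀ k, 0 < t k ∧ t k ≤ n + 1) ∧
      ∀ k, ‖birkhoffSum f g (segStart (fun _ ↦ n) t (k + 1)) z -
        birkhoffSum f g (segStart (fun _ ↦ n) t k) z - birkhoffSum f g n (C k)‖ ≤ ε * n := by
  obtain ⟨δ, hδ, hδ1, hδg⟩ : ∃ δ : ℝ, 0 < δ ∧ δ ≤ 1 ∧ (δ + 2 * δ) * ‖g‖ ≤ ε / 2 := by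
    refine ⟨min 1 (ε / 2 / (3 * ‖g‖ + 1)), by positivity, min_le_left _ _, ?_⟩
    have := min_le_right 1 (ε / 2 / (3 * ‖g‖ + 1))
    rw [le_div_iff₀ (by positivity)] at this
    nlinarith [show 0 < min 1 (ε / 2 / (3 * ‖g‖ + 1)) by positivity]
  obtain ⟨η, hη, hgη⟩ : ∃ η > 0, ∀ x y, dist x y ≤ η → ‖g x - g y‖ ≤ ε / 2 := by
    simpa only [dist_eq_norm] using Metric.uniformContinuous_iff_le.1
      (CompactSpace.uniformContinuous_of_continuous g.continuous) (ε / 2) (half_pos hε)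
  obtain ⟨M, hM⟩ := happ δ δ η hδ hδ hη
  refine ⟨M + 1, M.succ_pos, fun C ↦ ?_⟩
  set n := M + 1
  obtain ⟨t, ht, htδ, z, hz⟩ := hM n M.lt_succ_self C
  refine ⟨t, z, fun k ↦ ⟨ht k, ?_⟩, fun k ↦ ?_⟩
  · have : (t k : ℝ) ≤ n + 1 := by nlinarith [htδ k, n.cast_nonneg (α := ℝ)]
    exact_mod_cast this
  · refine (hz.norm_birkhoffSum_sub_le (half_pos hε).le g.norm_coe_le_norm hgη (ht k)
      (htδ k)).trans ?_
    gcongr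
    linarith

/-- The tracing point follows the orbit segments of `x 0, …, x (L - 1)` repeated for ever. -/
theorem exists_isBlockPartition (happ : ApproxProduct f) (g : C(X, E)) {ε : ℝ} (hε : 0 < ε) :
    ∃ n, 0 < n ∧ ∀ (L : ℕ) (x : ℕ → X), 0 < L →
      ‖∑ i ∈ Finset.range L, birkhoffSum f g n (x i)‖ ≤ ε * n * L →
      ∃ (z : X) (τ : ℕ → ℕ) (W : ℕ), IsBlockPartition τ W ∧
        ∀ q, dist (birkhoffSum f g (τ q) z) (birkhoffSum f g (τ (q + 1)) z) ≤
          2 * ε * (τ (q + 1) - τ q) := by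
  obtain ⟨n, hn, htrace⟩ := happ.exists_norm_birkhoffSum_segStart_sub_le g hε
  refine ⟨n, hn, fun L x hL hx ↦ ?_⟩
  obtain ⟨t, z, ht, hz⟩ := htrace fun k ↦ x (k % L)
  set s := segStart (fun _ ↦ n) t
  have hs : IsBlockPartition s (2 * n) :=
    isBlockPartition_segStart (fun _ ↦ hn) (fun k ↦ (ht k).1) fun k ↦ by have := (ht k).2; omega
  refine ⟨z, _, _, hs.comp_mul_right hL, fun q ↦ ?_⟩
  have hlength : (n : ℝ) * L ≤ s ((q + 1) * L) - s (q * L) := by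
    rw [add_one_mul, le_sub_iff_add_le']
    exact_mod_cast segStart_add_mul_le (fun k ↦ (ht k).1) (q * L) L
  calc dist (birkhoffSum f g (s (q * L)) z) (birkhoffSum f g (s ((q + 1) * L)) z)
      ≤ L * (ε * n) + ‖∑ i ∈ Finset.range L, birkhoffSum f g n (x i)‖ := by
        rw [dist_comm, dist_eq_norm]
        exact norm_sub_le_of_forall_norm_sub_sub_mod_le (A := fun k ↦ birkhoffSum f g (s k) z)
          (B := fun i ↦ birkhoffSum f g n (x i)) hz q
    _ ≤ L * (ε * n) + ε * n * L := by gcongr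
    _ = 2 * ε * (n * L) := by ring
    _ ≤ 2 * ε * (s ((q + 1) * L) - s (q * L)) := by gcongr

variable [NormedSpace ℝ E] [CompleteSpace E] [MeasurableSpace X] [BorelSpace X]

theorem exists_forall_norm_birkhoffSum_iterate_le (happ : ApproxProduct f) (hf : Continuous f)
    {μ : Measure X} [IsProbabilityMeasure μ] (hμ : MeasurePreserving f μ μ) (g : C(X, E))
    (hg : ∫ x, g x ∂μ = 0) {ε : ℝ} (hε : 0 < ε) :
    ∃ (z : X) (N : ℕ), 0 < N ∧ ∀ a, ‖birkhoffSum f g N (f^[a] z)‖ ≤ ε * N := by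
  obtain ⟨n, hn, htrace⟩ := happ.exists_isBlockPartition g (ε := ε / 3) (by positivity)
  have hcont : Continuous (birkhoffSum f g n) := continuous_birkhoffSum hf g.continuous n
  have hintegral : ∫ x, birkhoffSum f g n x ∂μ = 0 := by
    rw [integral_birkhoffSum hμ (g.continuous.integrable_of_hasCompactSupport
      (HasCompactSupport.of_compactSpace _)), hg, smul_zero]
  obtain ⟨L, hL, x, hx⟩ := exists_norm_sum_le_of_integral_eq_zero hcont.stronglyMeasurable
    (hcont.integrable_of_hasCompactSupport (HasCompactSupport.of_compactSpace _)) hintegral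
    (ε := ε / 3 * n) (by positivity)
  obtain ⟨z, τ, W, hτ, hblock⟩ := htrace L x hL hx
  exact ⟨z, hτ.exists_forall_norm_birkhoffSum_iterate_le g.norm_coe_le_norm (by linarith)
    hblock⟩

theorem exists_ergodic_norm_integral_sub_le (happ : ApproxProduct f) (hf : Continuous f)
    {μ : Measure X} [IsProbabilityMeasure μ] (hμ : MeasurePreserving f μ μ) (g : C(X, E))
    {ε : ℝ} (hε : 0 < ε) :
    ∃ ν : ProbabilityMeasure X, Ergodic f (ν : Measure X) ∧
      ‖∫ x, g x ∂(ν : Measure X) - ∫ x, g x ∂μ‖ ≤ ε := by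
  have hint (g : C(X, E)) (ρ : Measure X) [IsProbabilityMeasure ρ] : Integrable g ρ :=
    g.continuous.integrable_of_hasCompactSupport (HasCompactSupport.of_compactSpace _)
  let h : C(X, E) := g - ContinuousMap.const X (∫ x, g x ∂μ)
  have integral_h (ρ : Measure X) [IsProbabilityMeasure ρ] :
      ∫ x, h x ∂ρ = ∫ x, g x ∂ρ - ∫ x, g x ∂μ := by
    simp [h, integral_sub (hint g ρ) (integrable_const _)]
  obtain ⟨z, N, hN, hz⟩ := happ.exists_forall_norm_birkhoffSum_iterate_le hf hμ h
    (by rw [integral_h, sub_self]) hε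
  let K : Set X := {y | ∀ a, ‖birkhoffSum f h N (f^[a] y)‖ ≤ ε * N}
  have hclosed : IsClosed K := by
    simp only [K, ofPred_forall]
    exact isClosed_iInter fun a ↦ isClosed_le
      ((continuous_birkhoffSum hf h.continuous N).comp (hf.iterate a)).norm continuous_const
  have hmaps : MapsTo f K K := fun y hy a ↦ hy (a + 1)
  obtain ⟨ν, hν, hνK⟩ := exists_ergodic_ae_mem hf hclosed ⟨z, hz⟩ hmaps
  refine ⟨ν, hν, ?_⟩
  rw [← integral_h]
  exact norm_integral_le_of_ae_norm_birkhoffSum_le hν.toMeasurePreserving (hint h _) hN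
    (hνK.mono fun y hy ↦ hy 0)

end ApproxProduct

/-- **Entropy denseness of ergodic measures (Pfister–Sullivan).** For a compact
system with the approximate product property, the ergodic `f`-invariant Borel
probability measures are dense, in the weak-* topology, in the set of all
`f`-invariant Borel probability measures. -/
theorem app_ergodic_measures_dense
    {X : Type*} [MetricSpace X] [CompactSpace X] [MeasurableSpace X] [BorelSpace X]
    (f : X → X) (hf : Continuous f) (happ : ApproxProduct f) :
    ∀ μ : ProbabilityMeasure X, Measure.map f (μ : Measure X) = μ →
      μ ∈ closure {ν : ProbabilityMeasure X | Ergodic f (ν : Measure X)} := by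
  intro μ hμ
  refine mem_closure_of_forall_finset_exists_dist_testIntegrals_le fun F ε hε ↦ ?_
  let g : C(X, F → ℝ) := ⟨fun x φ ↦ φ.1 x, by fun_prop⟩
  obtain ⟨ν, hν, hclose⟩ :=
    happ.exists_ergodic_norm_integral_sub_le hf ⟨hf.measurable, hμ⟩ g hε
  have integral_g (ρ : ProbabilityMeasure X) (φ : F) :
      (∫ x, g x ∂(ρ : Measure X)) φ = testIntegrals ρ φ :=
    eval_integral (fun ψ : F ↦ ψ.1.integrable _) φ
  refine ⟨ν, hν, fun φ hφ ↦ ?_⟩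
  rw [dist_eq_norm, ← integral_g ν ⟨φ, hφ⟩, ← integral_g μ ⟨φ, hφ⟩]
  exact (norm_le_pi_norm (∫ x, g x ∂(ν : Measure X) - ∫ x, g x ∂(μ : Measure X)) _).trans hclose

end Defs
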